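/- Let ℤ be given the ℤ[ℤ/2]-module structures: M₋ where the generator τ acts by -1, M₊ where τ acts by +1, and let M_reg = ℤ[ℤ/2] be the regular module. Then every finitely generated ℤ-free ℤ[ℤ/2]-module is isomorphic to a direct sum of copies of M₋, M₊, and M_reg. -/

import Mathlib

/-- A section `s` of `g` splits the source of `g` as the product of `ker g` and the target. -/
def LinearMap.kerProdEquivOfSection {R M P : Type*} [Ring R] [AddCommGroup M] [Module R M]
    [AddCommGroup P] [Module R P] (g : M →ₗ[R] P) (s : P →ₗ[R] M) (h : ∀ p, g (s p) = p) :
    (ker g × P) ≃ₗ[R] M where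
  toFun y := (y.1 : M) + s y.2
  map_add' x y := by simp only [Prod.fst_add, Prod.snd_add, Submodule.coe_add, map_add]; abel
  map_smul' r x := by simp
  invFun x := (⟨x - s (g x), by simp [h]⟩, g x)
  left_inv y := by ext <;> simp [h]
  right_inv x := by simp

/-- Modulo `2`, a linear map between finite free `ℤ`-modules is, in suitable bases, an identity
block extended by zero. -/
theorem exists_bases_identity_block_mod_two {P K : Type*} [AddCommGroup P] [Module.Finite ℤ P]
    [Module.Free ℤ P] [AddCommGroup K] [Module.Finite ℤ K] [Module.Free ℤ K] (f : P →ₗ[ℤ] K) :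
    ∃ (a b c : ℕ) (kb : Module.Basis (Fin a ⊕ Fin c) ℤ K) (pb : Module.Basis (Fin b ⊕ Fin c) ℤ P)
      (g : P →ₗ[ℤ] K), (∀ i, f (pb (.inl i)) = (2 : ℤ) • g (pb (.inl i))) ∧
        ∀ i, f (pb (.inr i)) = kb (.inr i) + (2 : ℤ) • g (pb (.inr i)) := by
  classical
  obtain ⟨n, bK, bN, φ, d, hd⟩ := Submodule.smithNormalForm (Module.Free.chooseBasis ℤ K) f.range
  obtain ⟨t, ht⟩ := Module.projective_lifting_property f.rangeRestrict LinearMap.id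
    f.surjective_rangeRestrict
  have ht' : ∀ y, f.rangeRestrict (t y) = y := fun y => LinearMap.congr_fun ht y
  have hft : ∀ j, f (t (bN j)) = d j • bK (φ j) := fun j => by
    rw [← hd, ← congrArg Subtype.val (ht' (bN j))]; rfl
  let bZ := Module.Free.chooseBasis ℤ (LinearMap.ker f.rangeRestrict)
  let pb₀ := (bZ.prod bN).map (f.rangeRestrict.kerProdEquivOfSection t ht')
  have hpl : ∀ i, pb₀ (.inl i) = bZ i := fun i => by
    simp [pb₀, LinearMap.kerProdEquivOfSection]
  have hpr : ∀ j, pb₀ (.inr j) = t (bN j) := fun j => by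
    simp [pb₀, LinearMap.kerProdEquivOfSection]
  have hfl : ∀ i, f (bZ i : P) = 0 := fun i => congrArg Subtype.val (bZ i).2
  let C := {j // Odd (d j)}
  let A := {i // ¬ ∃ j : C, φ j = i}
  let eC : C ≃ {i // ∃ j : C, φ j = i} :=
    Equiv.ofInjective (fun j : C => φ j) (φ.injective.comp Subtype.val_injective)
  let eK : A ⊕ C ≃ _ := (Equiv.sumComm A C).trans <|
    (Equiv.sumCongr eC (Equiv.refl A)).trans (Equiv.sumCompl fun i => ∃ j : C, φ j = i)
  let eN : {j // ¬ Odd (d j)} ⊕ C ≃ Fin n :=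
    (Equiv.sumComm _ _).trans (Equiv.sumCompl fun j => Odd (d j))
  let eP := (Equiv.sumAssoc (Module.Free.ChooseBasisIndex ℤ (LinearMap.ker f.rangeRestrict))
    {j // ¬ Odd (d j)} C).trans (Equiv.sumCongr (Equiv.refl _) eN)
  have : Fintype A := Fintype.ofFinite A
  let qA := Fintype.equivFin A
  let qC := Fintype.equivFin C
  let qB := Fintype.equivFin
    (Module.Free.ChooseBasisIndex ℤ (LinearMap.ker f.rangeRestrict) ⊕ {j // ¬ Odd (d j)})
  refine ⟨_, _, _, bK.reindex (eK.symm.trans (Equiv.sumCongr qA qC)),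
    pb₀.reindex (eP.symm.trans (Equiv.sumCongr qB qC)),
    pb₀.constr ℤ (Sum.elim 0 fun j => (d j / 2) • bK (φ j)), fun i => ?_, fun i => ?_⟩
  · obtain ⟨i, rfl⟩ := qB.surjective i
    rw [Module.Basis.reindex_apply]
    rcases i with i | j
    · have h : (eP.symm.trans (Equiv.sumCongr qB qC)).symm (.inl (qB (.inl i))) = .inl i := by
        simp [eP]
      rw [h, Module.Basis.constr_basis, hpl, hfl]
      simp
    · have h : (eP.symm.trans (Equiv.sumCongr qB qC)).symm (.inl (qB (.inr j))) = .inr j.1 := by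
        simp [eP, eN]; rfl
      rw [h, Module.Basis.constr_basis, hpr, hft, Sum.elim_inr, smul_smul,
        Int.two_mul_ediv_two_of_even (Int.not_odd_iff_even.1 j.2)]
  · obtain ⟨j, rfl⟩ := qC.surjective i
    have h : (eP.symm.trans (Equiv.sumCongr qB qC)).symm (.inr (qC j)) = .inr j.1 := by
      simp [eP, eN]; rfl
    have h' : (eK.symm.trans (Equiv.sumCongr qA qC)).symm (.inr (qC j)) = φ j.1 := by
      simp [eK, eC]; rfl
    rw [Module.Basis.reindex_apply, Module.Basis.reindex_apply, h, h', Module.Basis.constr_basis,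
      hpr, hft, Sum.elim_inr]
    nth_rw 1 [← Int.two_mul_ediv_two_add_one_of_odd j.2]
    module

/-- Reiner's classification of `ℤ[ℤ/2]`-lattices: every finitely generated `ℤ`-free
module `M` with an action of `ℤ/2` (given by an additive involution `τ`) decomposes as
a direct sum of copies of the sign module `M₋` (`τ` acts by `-1`), the trivial module
`M₊` (`τ` acts by `+1`), and the regular module `M_reg = ℤ[ℤ/2]` (`τ` swaps a basis
pair). Concretely: there are `a, b, c` and an additive isomorphism
`e : M ≃+ (Fin a → ℤ) × (Fin b → ℤ) × (Fin c → ℤ × ℤ)` transporting `τ` to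
(negation, identity, coordinate swap). -/
theorem reiner_classification_order_two (M : Type*) [AddCommGroup M]
    [Module.Finite ℤ M] [Module.Free ℤ M]
    (τ : M ≃+ M) (hτ : ∀ x, τ (τ x) = x) :
    ∃ (a b c : ℕ) (e : M ≃+ ((Fin a → ℤ) × (Fin b → ℤ) × (Fin c → ℤ × ℤ))),
      ∀ x : M, e (τ x) =
        (-(e x).1, (e x).2.1, fun i => Prod.swap ((e x).2.2 i)) := by
  let T : M →ₗ[ℤ] M := τ.toAddMonoidHom.toIntLinearMap
  have hT : ∀ x, T x = τ x := fun _ => rfl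
  let π := (LinearMap.id + T).rangeRestrict
  have hπ : ∀ x, (π x : M) = x + τ x := fun _ => rfl
  have hK : ∀ k : LinearMap.ker π, τ k = -(k : M) := fun k => by
    have h := congrArg Subtype.val k.2
    rw [hπ] at h
    exact (neg_eq_of_add_eq_zero_right h).symm
  obtain ⟨s, hs⟩ := Module.projective_lifting_property π LinearMap.id
    (LinearMap.surjective_rangeRestrict _)
  have hs' : ∀ p, π (s p) = p := fun p => LinearMap.congr_fun hs p
  let f : LinearMap.range (LinearMap.id + T) →ₗ[ℤ] LinearMap.ker π :=
    ((T - LinearMap.id) ∘ₗ s).codRestrict _ fun p => by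
      refine Subtype.ext ?_
      rw [hπ]
      simp [hT, hτ]
  have hf : ∀ p, (f p : M) = τ (s p) - s p := fun _ => rfl
  obtain ⟨a, b, c, kb, pb, g, hl, hr⟩ := exists_bases_identity_block_mod_two f
  let s' := s + (LinearMap.ker π).subtype ∘ₗ g
  have hs'' : ∀ p, π (s' p) = p := fun p => by
    have h : π (g p) = 0 := (g p).2
    simp [s', hs', h]
  let F := f - (2 : ℤ) • g
  let E := π.kerProdEquivOfSection s' hs''
  have hE : ∀ y, τ (E y) = E (-y.1 + F y.2, y.2) := fun y => by
    have h : τ (s y.2) = f y.2 + s y.2 := by rw [hf]; abel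
    simp only [E, LinearMap.kerProdEquivOfSection, s', F, LinearEquiv.coe_mk, LinearMap.coe_mk,
      AddHom.coe_mk, LinearMap.add_apply, LinearMap.comp_apply, Submodule.subtype_apply, map_add,
      hK, h, LinearMap.sub_apply, LinearMap.smul_apply, Submodule.coe_add, Submodule.coe_neg,
      Submodule.coe_sub, Submodule.coe_smul]
    module
  have hFl : ∀ p i, kb.repr (F p) (.inl i) = 0 := fun p i => by
    have : kb.coord (.inl i) ∘ₗ F = 0 := pb.ext fun j => by
      rcases j with j | j <;> simp [F, hl, hr]
    exact LinearMap.congr_fun this p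
  have hFr : ∀ p i, kb.repr (F p) (.inr i) = pb.repr p (.inr i) := fun p i => by
    have : kb.coord (.inr i) ∘ₗ F = pb.coord (.inr i) := pb.ext fun j => by
      rcases j with j | j <;> simp [F, hl, hr, Finsupp.single_apply]
    exact LinearMap.congr_fun this p
  let D : (LinearMap.ker π × LinearMap.range (LinearMap.id + T)) ≃+
      ((Fin a → ℤ) × (Fin b → ℤ) × (Fin c → ℤ × ℤ)) :=
    { toFun := fun y => (fun i => kb.equivFun y.1 (.inl i), fun i => pb.equivFun y.2 (.inl i),
        fun i => (pb.equivFun y.2 (.inr i) - kb.equivFun y.1 (.inr i), kb.equivFun y.1 (.inr i)))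
      invFun := fun z => (kb.equivFun.symm (Sum.elim z.1 fun i => (z.2.2 i).2),
        pb.equivFun.symm (Sum.elim z.2.1 fun i => (z.2.2 i).1 + (z.2.2 i).2))
      left_inv := fun y => by
        refine Prod.ext (kb.equivFun.injective ?_) (pb.equivFun.injective ?_) <;>
        · rw [LinearEquiv.apply_symm_apply]
          ext (i | i) <;> simp
      right_inv := fun z => by
        simp only [LinearEquiv.apply_symm_apply]
        ext <;> simp
      map_add' := fun x y => by
        ext <;> simp
        ring }
  refine ⟨a, b, c, E.symm.toAddEquiv.trans D, fun x => ?_⟩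
  obtain ⟨y, rfl⟩ := E.surjective x
  rw [hE]
  ext <;> simp [D, hFl, hFr, neg_add_eq_sub]
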